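/- Let Φ(R,v1,v2,v3) = α(R)(φ(v1)+φ(v2)+φ(v3)) + h(v1v2v3), where α ∈ C¹([0,1]) is positive with α'(R) ≤ 0 for all R, φ:(0,∞)→[0,∞) is convex and differentiable with φ'(t) ≥ 0 for all t, and h:(0,∞)→(0,∞) is strictly convex and differentiable, attaining its global minimum at d₀>0. Assume 0<k0≤ρ0(R)≤k1 on [0,1]. Let λ>0 with λ³ < d₀ and let r be a minimizer of I over A_λ. Then r(0)=0. -/

import Mathlib

open MeasureTheory Real Set Filter

/-- `M_R = 4π ∫₀^R ρ0(u) u² du`. -/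
noncomputable def Mfun (ρ0 : ℝ → ℝ) (R : ℝ) : ℝ := 4 * π * ∫ u in (0:ℝ)..R, ρ0 u * u ^ 2

/-- Mechanical energy. -/
noncomputable def Imec (Φ : ℝ → ℝ → ℝ → ℝ → ℝ) (r r' : ℝ → ℝ) : ℝ :=
  ∫ R in Ioo (0:ℝ) 1, Φ R (r' R) (r R / R) (r R / R) * R ^ 2

/-- Gravitational potential energy. -/
noncomputable def Ipot (ρ0 : ℝ → ℝ) (r : ℝ → ℝ) : ℝ :=
  ∫ R in Ioo (0:ℝ) 1, ρ0 R * Mfun ρ0 R * (r R)⁻¹ * R ^ 2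

/-- Total energy `I = I_mec − I_pot`. -/
noncomputable def Ifun (Φ : ℝ → ℝ → ℝ → ℝ → ℝ) (ρ0 : ℝ → ℝ) (r r' : ℝ → ℝ) : ℝ :=
  Imec Φ r r' - Ipot ρ0 r

/-- The admissible set `A_λ`. -/
def Adm (Φ : ℝ → ℝ → ℝ → ℝ → ℝ) (lam : ℝ) (r r' : ℝ → ℝ) : Prop :=
  IntervalIntegrable r' volume 0 1 ∧
  (∀ x ∈ Icc (0:ℝ) 1, r x = r 0 + ∫ t in (0:ℝ)..x, r' t) ∧
  (∀ᵐ R ∂volume.restrict (Ioo (0:ℝ) 1), 0 < r' R) ∧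
  r 1 = lam ∧ 0 ≤ r 0 ∧
  IntegrableOn (fun R => Φ R (r' R) (r R / R) (r R / R) * R ^ 2) (Ioo (0:ℝ) 1)

/-!
Suppose a minimizer `r` had a cavity, `r 0 > 0`. Its graph starts strictly above the line `lam * R`
and meets it at `R = 1`, so there is a first crossing radius `b`. Filling the cavity, that is,
replacing `r` by `lam * R` on `[0, b]`, strictly lowers the energy. Indeed `r` decreases pointwise,
so `Ipot` does not decrease. For the mechanical energy, use the tangent lines of `φ` at `lam`
(slope `p ≥ 0`) and of `h` at `lam ^ 3` (slope `q < 0`, since `lam ^ 3 < d0`). The tangent term of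
`φ` integrates to `p * ∫ α * G'` with `G = R ^ 2 * (r - lam * R) ≥ 0` and `G 0 = 0`, which is
nonnegative because `α` is nonincreasing and nonnegative. The tangent term of `h` is the exact
derivative of `q / 3 * (r ^ 3 - (lam * R) ^ 3)` and integrates to `-q / 3 * r 0 ^ 3 > 0`, the
contribution of the cavity volume.
-/

/-! ### Convexity, monotonicity and first zeros -/

lemma lt_of_strictConvexOn_of_forall_le {E : Type*} [AddCommGroup E] [Module ℝ E] {s : Set E}
    {f : E → ℝ} {x y : E} (hf : StrictConvexOn ℝ s f) (hx : x ∈ s) (hy : y ∈ s)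
    (hmin : ∀ z ∈ s, f x ≤ f z) (hxy : x ≠ y) : f x < f y :=
  (hmin y hy).lt_of_ne fun heq =>
    hxy (hf.eq_of_isMinOn hmin (fun z hz => heq ▸ hmin z hz) hx hy)

lemma monotoneOn_of_forall_hasDerivWithinAt_nonneg {s : Set ℝ} {f f' : ℝ → ℝ}
    (hs : Convex ℝ s) (hf : ∀ x ∈ s, HasDerivWithinAt f (f' x) s x) (hf' : ∀ x ∈ s, 0 ≤ f' x) :
    MonotoneOn f s :=
  monotoneOn_of_hasDerivWithinAt_nonneg hs (fun x hx => (hf x hx).continuousWithinAt)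
    (fun x hx => (hf x (interior_subset hx)).mono interior_subset)
    fun x hx => hf' x (interior_subset hx)

lemma antitoneOn_of_forall_hasDerivWithinAt_nonpos {s : Set ℝ} {f f' : ℝ → ℝ}
    (hs : Convex ℝ s) (hf : ∀ x ∈ s, HasDerivWithinAt f (f' x) s x) (hf' : ∀ x ∈ s, f' x ≤ 0) :
    AntitoneOn f s :=
  antitoneOn_of_hasDerivWithinAt_nonpos hs (fun x hx => (hf x hx).continuousWithinAt)
    (fun x hx => (hf x (interior_subset hx)).mono interior_subset)
    fun x hx => hf' x (interior_subset hx)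

lemma exists_subgradient_of_mem_interior {s : Set ℝ} {f : ℝ → ℝ} {x : ℝ}
    (hf : ConvexOn ℝ s f) (hx : x ∈ interior s) :
    ∃ m, ∀ y ∈ s, f x + m * (y - x) ≤ f y := by
  refine ⟨derivWithin f (Ioi x) x, fun y hy => ?_⟩
  rcases lt_trichotomy x y with hxy | rfl | hyx
  · have hslope := hf.rightDeriv_le_slope_of_mem_interior hx hy hxy
    rw [slope_def_field, le_div_iff₀ (sub_pos.2 hxy)] at hslope
    linarith
  · simp
  · have hslope := (hf.slope_le_leftDeriv_of_mem_interior hy hx hyx).trans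
      (hf.leftDeriv_le_rightDeriv_of_mem_interior hx)
    rw [slope_def_field, div_le_iff₀ (sub_pos.2 hyx)] at hslope
    linarith

lemma exists_first_zero {f : ℝ → ℝ} {a b : ℝ} (hab : a ≤ b) (hf : ContinuousOn f (Icc a b))
    (ha : 0 < f a) (hb : f b ≤ 0) :
    ∃ c ∈ Ioc a b, f c = 0 ∧ ∀ x ∈ Ico a c, 0 < f x := by
  have hclosed : IsClosed (Icc a b ∩ f ⁻¹' Iic 0) := hf.preimage_isClosed_of_isClosed
    isClosed_Icc isClosed_Iic
  obtain ⟨c, ⟨hc, hfc⟩, hleast⟩ := (isCompact_Icc.of_isClosed_subset hclosed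
    inter_subset_left).exists_isLeast ⟨b, right_mem_Icc.2 hab, hb⟩
  have hpos : ∀ x ∈ Ico a c, 0 < f x := fun x hx =>
    not_le.1 fun hfx => hx.2.not_ge (hleast ⟨⟨hx.1, hx.2.le.trans hc.2⟩, hfx⟩)
  have hac : a < c := hc.1.lt_of_ne fun h => ha.not_ge (h ▸ hfc)
  obtain ⟨d, hd, hfd⟩ := intermediate_value_Icc' hc.1 (hf.mono (Icc_subset_Icc_right hc.2))
    ⟨hfc, ha.le⟩
  rcases hd.2.eq_or_lt with rfl | hdc
  · exact ⟨d, ⟨hac, hc.2⟩, hfd, hpos⟩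
  · exact absurd hfd (hpos d ⟨hd.1, hdc⟩).ne'

/-! ### Integrability and antitone weights -/

lemma integrableOn_of_forall_bounds {X : Type*} [MeasurableSpace X] {μ : Measure X} {s : Set X}
    {f : X → ℝ} {c d : ℝ} (hs : MeasurableSet s) (hμs : μ s ≠ ⊤) (hf : Measurable f)
    (hbound : ∀ x ∈ s, c ≤ f x ∧ f x ≤ d) : IntegrableOn f s μ :=
  Measure.integrableOn_of_bounded (M := max |c| |d|) hμs hf.aestronglyMeasurable <|
    (ae_restrict_mem hs).mono fun x hx => abs_le_max_abs_abs (hbound x hx).1 (hbound x hx).2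

lemma intervalIntegrable_mul_of_antitoneOn {w g : ℝ → ℝ} {a b : ℝ} (hab : a ≤ b)
    (hw : AntitoneOn w (Icc a b)) (hg : IntervalIntegrable g volume a b) :
    IntervalIntegrable (fun x => w x * g x) volume a b := by
  rw [intervalIntegrable_iff_integrableOn_Icc_of_le hab] at hg ⊢
  refine hg.bdd_mul (c := max |w b| |w a|)
    (aemeasurable_restrict_of_antitoneOn measurableSet_Icc hw).aestronglyMeasurable ?_
  filter_upwards [ae_restrict_mem measurableSet_Icc] with x hx
  exact abs_le_max_abs_abs (hw hx (right_mem_Icc.2 hab) hx.2) (hw (left_mem_Icc.2 hab) hx hx.1)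

lemma setIntegral_inter_isLowerSet_nonneg {g : ℝ → ℝ} {a b : ℝ} {s : Set ℝ}
    (hG : ∀ x ∈ Icc a b, 0 ≤ ∫ t in a..x, g t) (hs : IsLowerSet s) :
    0 ≤ ∫ x in Ioc a b ∩ s, g x := by
  rcases (Ioc a b ∩ s).eq_empty_or_nonempty with hempty | hne
  · simp [hempty]
  have hbdd : BddAbove (Ioc a b ∩ s) := ⟨b, fun x hx => hx.1.2⟩
  set c := sSup (Ioc a b ∩ s)
  obtain ⟨y, hy⟩ := hne
  have hac : a ≤ c := hy.1.1.le.trans (le_csSup hbdd hy)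
  have hcb : c ≤ b := csSup_le ⟨y, hy⟩ fun x hx => hx.1.2
  have hsub : Ioc a b ∩ s ⊆ Ioc a c := fun x hx => ⟨hx.1.1, le_csSup hbdd hx⟩
  have hsup : Ioo a c ⊆ Ioc a b ∩ s := fun x hx => by
    obtain ⟨z, hz, hxz⟩ := exists_lt_of_lt_csSup ⟨y, hy⟩ hx.2
    exact ⟨⟨hx.1, hx.2.le.trans hcb⟩, hs hxz.le hz.2⟩
  have hae : (Ioc a b ∩ s : Set ℝ) =ᵐ[volume] Ioc a c :=
    hsub.eventuallyLE.antisymm (Ioo_ae_eq_Ioc.symm.le.trans hsup.eventuallyLE)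
  rw [setIntegral_congr_set hae, ← intervalIntegral.integral_of_le hac]
  exact hG c ⟨hac, hcb⟩

-- Layer-cake: `w` is a superposition of indicators of the initial intervals `{x | t < w x}`.
lemma setIntegral_antitone_mul_nonneg {w g : ℝ → ℝ} {a b : ℝ} (hw : Antitone w)
    (hwb : 0 ≤ w b) (hg : IntegrableOn g (Ioc a b))
    (hG : ∀ x ∈ Icc a b, 0 ≤ ∫ t in a..x, g t) :
    0 ≤ ∫ x in Ioc a b, w x * g x := by
  set F : ℝ → ℝ → ℝ := fun x t => (Iio (w x)).indicator (fun _ => g x) t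
  have hFint : Integrable (Function.uncurry F)
      ((volume.restrict (Ioc a b)).prod (volume.restrict (Ioo 0 (w a)))) := by
    have hmeas : MeasurableSet {z : ℝ × ℝ | z.2 < w z.1} :=
      measurableSet_lt measurable_snd (hw.measurable.comp measurable_fst)
    exact (Integrable.comp_fst hg _).indicator hmeas
  have hlayers : ∀ x ∈ Ioc a b, ∫ t in Ioo 0 (w a), F x t = w x * g x := fun x hx => by
    have hinter : Iio (w x) ∩ Ioo 0 (w a) = Ioo 0 (w x) := by
      rw [inter_comm, Ioo_inter_Iio, min_eq_right (hw hx.1.le)]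
    rw [integral_indicator_const _ measurableSet_Iio,
      measureReal_restrict_apply measurableSet_Iio, hinter,
      Real.volume_real_Ioo_of_le (hwb.trans (hw hx.2)), sub_zero, smul_eq_mul]
  rw [← setIntegral_congr_fun measurableSet_Ioc hlayers, integral_integral_swap hFint]
  refine integral_nonneg fun t => ?_
  have hlevel : MeasurableSet {x | t < w x} := measurableSet_lt measurable_const hw.measurable
  have hslice : (fun x => F x t) = {x | t < w x}.indicator g := rfl
  rw [hslice, setIntegral_indicator hlevel]
  exact setIntegral_inter_isLowerSet_nonneg hG fun x y hyx hx => lt_of_lt_of_le hx (hw hyx)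

lemma integral_antitoneOn_mul_nonneg {w g : ℝ → ℝ} {a b : ℝ} (hab : a ≤ b)
    (hw : AntitoneOn w (Icc a b)) (hwb : 0 ≤ w b) (hg : IntervalIntegrable g volume a b)
    (hG : ∀ x ∈ Icc a b, 0 ≤ ∫ t in a..x, g t) :
    0 ≤ ∫ x in a..b, w x * g x := by
  obtain ⟨v, hv, hwv⟩ := hw.exists_antitone_extension
    ⟨w b, forall_mem_image.2 fun x hx => hw hx (right_mem_Icc.2 hab) hx.2⟩
    ⟨w a, forall_mem_image.2 fun x hx => hw (left_mem_Icc.2 hab) hx hx.1⟩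
  have hcongr : ∫ x in Ioc a b, w x * g x = ∫ x in Ioc a b, v x * g x :=
    setIntegral_congr_fun measurableSet_Ioc fun x hx => by
      simp only [hwv (Ioc_subset_Icc_self hx)]
  rw [intervalIntegral.integral_of_le hab, hcongr]
  exact setIntegral_antitone_mul_nonneg hv (hwv (right_mem_Icc.2 hab) ▸ hwb) hg.1 hG

/-! ### Primitives of integrable functions -/

/-- On `[a, b]`, the function `u` is the Lebesgue primitive of the integrable function `u'`. This is
the membership `u ∈ W^{1,1}(a, b)` with weak derivative `u'`, in the form in which it occurs in
`Adm`; it is stable under the restrictions, products and gluings used to build competitors. -/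
structure IsPrimitiveOn (u u' : ℝ → ℝ) (a b : ℝ) : Prop where
  intervalIntegrable : IntervalIntegrable u' volume a b
  eq_add_integral : ∀ x ∈ Icc a b, u x = u a + ∫ t in a..x, u' t

lemma isPrimitiveOn_of_hasDerivAt {u u' : ℝ → ℝ} {a b : ℝ}
    (hu : ∀ x, HasDerivAt u (u' x) x) (hu' : Continuous u') : IsPrimitiveOn u u' a b where
  intervalIntegrable := hu'.intervalIntegrable a b
  eq_add_integral x _ := by
    rw [intervalIntegral.integral_eq_sub_of_hasDerivAt (fun t _ => hu t)
      (hu'.intervalIntegrable a x), add_sub_cancel]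

lemma isPrimitiveOn_const_mul_id (c a b : ℝ) : IsPrimitiveOn (fun x => c * x) (fun _ => c) a b :=
  isPrimitiveOn_of_hasDerivAt (fun x => by simpa using (hasDerivAt_id x).const_mul c)
    continuous_const

namespace IsPrimitiveOn

variable {u u' v v' : ℝ → ℝ} {a b c : ℝ}

lemma mono_right (hu : IsPrimitiveOn u u' a c) (hb : b ∈ Icc a c) : IsPrimitiveOn u u' a b where
  intervalIntegrable := hu.intervalIntegrable.mono_set
    (uIcc_subset_uIcc_left (Icc_subset_uIcc hb))
  eq_add_integral x hx := hu.eq_add_integral x ⟨hx.1, hx.2.trans hb.2⟩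

lemma mono_left (hu : IsPrimitiveOn u u' a c) (hb : b ∈ Icc a c) : IsPrimitiveOn u u' b c where
  intervalIntegrable := hu.intervalIntegrable.mono_set
    (uIcc_subset_uIcc_right (Icc_subset_uIcc hb))
  eq_add_integral x hx := by
    have hac : x ∈ Icc a c := ⟨hb.1.trans hx.1, hx.2⟩
    rw [hu.eq_add_integral x hac, hu.eq_add_integral b hb, add_assoc,
      intervalIntegral.integral_add_adjacent_intervals (hu.mono_right hb).intervalIntegrable
        ((hu.mono_right hac).intervalIntegrable.mono_set
          (uIcc_subset_uIcc_right (Icc_subset_uIcc ⟨hb.1, hx.1⟩)))]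

lemma integral_eq_sub (hu : IsPrimitiveOn u u' a b) (hab : a ≤ b) :
    ∫ t in a..b, u' t = u b - u a := by
  rw [hu.eq_add_integral b (right_mem_Icc.2 hab), add_sub_cancel_left]

lemma continuousOn (hu : IsPrimitiveOn u u' a b) (hab : a ≤ b) : ContinuousOn u (Icc a b) := by
  have hprim := intervalIntegral.continuousOn_primitive_interval
    ((intervalIntegrable_iff' (by simp)).1 hu.intervalIntegrable)
  rw [uIcc_of_le hab] at hprim
  exact (continuousOn_const.add hprim).congr hu.eq_add_integral

lemma monotoneOn (hu : IsPrimitiveOn u u' a b)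
    (hu' : ∀ᵐ x ∂volume.restrict (Ioo a b), 0 ≤ u' x) : MonotoneOn u (Icc a b) := by
  intro x hx y hy hxy
  have hux := hu.mono_left hx
  have hnonneg : 0 ≤ ∫ t in x..y, u' t := by
    rw [intervalIntegral.integral_of_le hxy, integral_Ioc_eq_integral_Ioo]
    exact integral_nonneg_of_ae
      (ae_restrict_of_ae_restrict_of_subset (Ioo_subset_Ioo hx.1 hy.2) hu')
  linarith [hux.eq_add_integral y ⟨hxy, hy.2⟩]

lemma sub (hu : IsPrimitiveOn u u' a b) (hv : IsPrimitiveOn v v' a b) :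
    IsPrimitiveOn (fun x => u x - v x) (fun x => u' x - v' x) a b where
  intervalIntegrable := hu.intervalIntegrable.sub hv.intervalIntegrable
  eq_add_integral x hx := by
    rw [intervalIntegral.integral_sub (hu.mono_right hx).intervalIntegrable
      (hv.mono_right hx).intervalIntegrable, hu.eq_add_integral x hx, hv.eq_add_integral x hx]
    ring

lemma integral_mul_eq_sub (hu : IsPrimitiveOn u u' a b) (hv : IsPrimitiveOn v v' a b)
    (hab : a ≤ b) : ∫ t in a..b, (u' t * v t + u t * v' t) = u b * v b - u a * v a := by
  set U : ℝ → ℝ := fun x => u a + ∫ t in a..x, u' t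
  set V : ℝ → ℝ := fun x => v a + ∫ t in a..x, v' t
  have hU : AbsolutelyContinuousOnInterval U a b :=
    ((LipschitzWith.const (u a)).lipschitzOnWith.absolutelyContinuousOnInterval).fun_add
      (hu.intervalIntegrable.absolutelyContinuousOnInterval_intervalIntegral left_mem_uIcc)
  have hV : AbsolutelyContinuousOnInterval V a b :=
    ((LipschitzWith.const (v a)).lipschitzOnWith.absolutelyContinuousOnInterval).fun_add
      (hv.intervalIntegrable.absolutelyContinuousOnInterval_intervalIntegral left_mem_uIcc)
  rw [hu.eq_add_integral b (right_mem_Icc.2 hab), hv.eq_add_integral b (right_mem_Icc.2 hab)]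
  have hUV := hU.integral_deriv_mul_eq_sub hV
  simp only [U, V, intervalIntegral.integral_same, add_zero] at hUV
  rw [← hUV]
  refine intervalIntegral.integral_congr_ae ?_
  filter_upwards [hu.intervalIntegrable.ae_hasDerivAt_integral,
    hv.intervalIntegrable.ae_hasDerivAt_integral] with x hux hvx hx
  have hxab : x ∈ uIcc a b := uIoc_subset_uIcc hx
  have hxIcc : x ∈ Icc a b := uIcc_of_le hab ▸ hxab
  rw [((hux hxab a left_mem_uIcc).const_add (u a)).deriv,
    ((hvx hxab a left_mem_uIcc).const_add (v a)).deriv, hu.eq_add_integral x hxIcc,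
    hv.eq_add_integral x hxIcc]

lemma mul (hu : IsPrimitiveOn u u' a b) (hv : IsPrimitiveOn v v' a b) (hab : a ≤ b) :
    IsPrimitiveOn (fun x => u x * v x) (fun x => u' x * v x + u x * v' x) a b where
  intervalIntegrable := by
    refine (hu.intervalIntegrable.mul_continuousOn ?_).add
      (hv.intervalIntegrable.continuousOn_mul ?_)
    · simpa only [uIcc_of_le hab] using hv.continuousOn hab
    · simpa only [uIcc_of_le hab] using hu.continuousOn hab
  eq_add_integral x hx := by
    rw [(hu.mono_right hx).integral_mul_eq_sub (hv.mono_right hx) hx.1, add_sub_cancel]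

lemma pow (hu : IsPrimitiveOn u u' a b) (hab : a ≤ b) (n : ℕ) :
    IsPrimitiveOn (fun x => u x ^ (n + 1)) (fun x => (n + 1) * u x ^ n * u' x) a b := by
  induction n with
  | zero => simpa using hu
  | succ n ih =>
    convert ih.mul hu hab using 2 with x x
    · exact pow_succ (u x) (n + 1)
    · push_cast
      ring

end IsPrimitiveOn

lemma intervalIntegrable_piecewise_Iic {f g : ℝ → ℝ} {a b c : ℝ} (hab : a ≤ b) (hbc : b ≤ c)
    (hf : IntervalIntegrable f volume a b) (hg : IntervalIntegrable g volume b c) :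
    IntervalIntegrable ((Iic b).piecewise f g) volume a c := by
  refine (hf.congr fun x hx => ?_).trans (hg.congr fun x hx => ?_)
  · rw [uIoc_of_le hab] at hx
    exact (piecewise_eq_of_mem (Iic b) f g hx.2).symm
  · rw [uIoc_of_le hbc] at hx
    exact (piecewise_eq_of_notMem (Iic b) f g hx.1.not_ge).symm

lemma integral_piecewise_Iic_of_le {f g : ℝ → ℝ} {a b c : ℝ} (hac : a ≤ c) (hcb : c ≤ b) :
    ∫ x in a..c, (Iic b).piecewise f g x = ∫ x in a..c, f x :=
  intervalIntegral.integral_congr fun _ hx =>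
    piecewise_eq_of_mem _ f g ((uIcc_of_le hac ▸ hx).2.trans hcb)

lemma integral_piecewise_Iic {f g : ℝ → ℝ} {a b c : ℝ} (hab : a ≤ b) (hbc : b ≤ c)
    (hf : IntervalIntegrable f volume a b) (hg : IntervalIntegrable g volume b c) :
    ∫ x in a..c, (Iic b).piecewise f g x = (∫ x in a..b, f x) + ∫ x in b..c, g x := by
  have hfg := intervalIntegrable_piecewise_Iic hab hbc hf hg
  rw [← intervalIntegral.integral_add_adjacent_intervals
    (hfg.mono_set (uIcc_subset_uIcc_left (Icc_subset_uIcc ⟨hab, hbc⟩)))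
    (hfg.mono_set (uIcc_subset_uIcc_right (Icc_subset_uIcc ⟨hab, hbc⟩))),
    integral_piecewise_Iic_of_le hab le_rfl]
  congr 1
  refine intervalIntegral.integral_congr_ae (ae_of_all _ fun x hx => ?_)
  rw [uIoc_of_le hbc] at hx
  exact piecewise_eq_of_notMem (Iic b) f g hx.1.not_ge

lemma IsPrimitiveOn.piecewise {u u' v v' : ℝ → ℝ} {a b c : ℝ} (hu : IsPrimitiveOn u u' a b)
    (hv : IsPrimitiveOn v v' b c) (hab : a ≤ b) (hbc : b ≤ c) (huv : u b = v b) :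
    IsPrimitiveOn ((Iic b).piecewise u v) ((Iic b).piecewise u' v') a c where
  intervalIntegrable :=
    intervalIntegrable_piecewise_Iic hab hbc hu.intervalIntegrable hv.intervalIntegrable
  eq_add_integral x hx := by
    rw [piecewise_eq_of_mem (Iic b) u v (mem_Iic.2 hab)]
    rcases le_or_gt x b with hxb | hbx
    · rw [piecewise_eq_of_mem (Iic b) u v (mem_Iic.2 hxb), integral_piecewise_Iic_of_le hx.1 hxb,
        hu.eq_add_integral x ⟨hx.1, hxb⟩]
    · rw [piecewise_eq_of_notMem (Iic b) u v (notMem_Iic.2 hbx),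
        integral_piecewise_Iic hab hbx.le hu.intervalIntegrable
          (hv.mono_right ⟨hbx.le, hx.2⟩).intervalIntegrable,
        hu.integral_eq_sub hab, hv.eq_add_integral x ⟨hbx.le, hx.2⟩, huv]
      ring

/-! ### Energies of admissible deformations -/

section Potential

variable {ρ0 r s : ℝ → ℝ} {c m : ℝ}

lemma Mfun_nonneg (hc : 0 ≤ c) (hρ0 : ∀ u ∈ Icc 0 c, 0 ≤ ρ0 u) : 0 ≤ Mfun ρ0 c :=
  mul_nonneg (by positivity)
    (intervalIntegral.integral_nonneg hc fun u hu => mul_nonneg (hρ0 u hu) (sq_nonneg u))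

lemma continuousOn_Mfun (hρ : IntegrableOn ρ0 (Icc 0 c)) : ContinuousOn (Mfun ρ0) (Icc 0 c) := by
  rcases le_or_gt 0 c with hc | hc
  · rw [← uIcc_of_le hc] at hρ ⊢
    exact continuousOn_const.mul (intervalIntegral.continuousOn_primitive_interval
      (hρ.mul_continuousOn (by fun_prop) isCompact_uIcc))
  · simp [Icc_eq_empty_of_lt hc]

lemma integrableOn_Ipot (hρ : IntegrableOn ρ0 (Icc 0 1)) (hs : ContinuousOn s (Icc 0 1))
    (hm : 0 < m) (hms : ∀ R ∈ Icc (0 : ℝ) 1, m * R ≤ s R) :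
    IntegrableOn (fun R => ρ0 R * Mfun ρ0 R * (s R)⁻¹ * R ^ 2) (Ioo 0 1) := by
  obtain ⟨C, hC⟩ := isCompact_Icc.exists_bound_of_continuousOn (continuousOn_Mfun hρ)
  have hmeas : AEMeasurable (fun R => Mfun ρ0 R * ((s R)⁻¹ * R ^ 2))
      (volume.restrict (Ioo 0 1)) := by
    have hMmeas := ((continuousOn_Mfun hρ).mono Ioo_subset_Icc_self).aemeasurable
      (μ := volume) measurableSet_Ioo
    have hsmeas := (hs.mono Ioo_subset_Icc_self).aemeasurable (μ := volume) measurableSet_Ioo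
    exact hMmeas.mul (hsmeas.inv.mul (by fun_prop))
  have hbound : ∀ R ∈ Ioo (0 : ℝ) 1, ‖Mfun ρ0 R * ((s R)⁻¹ * R ^ 2)‖ ≤ C * m⁻¹ := by
    intro R hR
    have hR01 := Ioo_subset_Icc_self hR
    have hRpos : 0 < R := hR.1
    have hspos : 0 < s R := (mul_pos hm hRpos).trans_le (hms R hR01)
    have hinv : (s R)⁻¹ * R ^ 2 ≤ m⁻¹ := calc
      (s R)⁻¹ * R ^ 2 ≤ (m * R)⁻¹ * R ^ 2 := by gcongr; exact hms R hR01
      _ = m⁻¹ * R := by field_simp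
      _ ≤ m⁻¹ := mul_le_of_le_one_right (inv_nonneg.2 hm.le) hR.2.le
    rw [norm_mul, Real.norm_of_nonneg (by positivity : 0 ≤ (s R)⁻¹ * R ^ 2)]
    exact mul_le_mul (hC R hR01) hinv (by positivity) ((norm_nonneg _).trans (hC R hR01))
  refine ((hρ.mono_set Ioo_subset_Icc_self).mul_bdd (c := C * m⁻¹) hmeas.aestronglyMeasurable
    ((ae_restrict_mem measurableSet_Ioo).mono hbound)).congr (ae_of_all _ fun R => ?_)
  ring

lemma Ipot_anti (hρ : IntegrableOn ρ0 (Icc 0 1)) (hρ0 : ∀ R ∈ Icc 0 1, 0 ≤ ρ0 R)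
    (hs : ContinuousOn s (Icc 0 1)) (hm : 0 < m) (hms : ∀ R ∈ Icc (0 : ℝ) 1, m * R ≤ s R)
    (hsr : ∀ R ∈ Ioo 0 1, s R ≤ r R) : Ipot ρ0 r ≤ Ipot ρ0 s := by
  have hspos : ∀ R ∈ Ioo 0 1, 0 < s R := fun R hR =>
    (mul_pos hm hR.1).trans_le (hms R (Ioo_subset_Icc_self hR))
  have hweight : ∀ R ∈ Ioo (0 : ℝ) 1, 0 ≤ ρ0 R * Mfun ρ0 R := fun R hR =>
    mul_nonneg (hρ0 R (Ioo_subset_Icc_self hR))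
      (Mfun_nonneg hR.1.le fun u hu => hρ0 u ⟨hu.1, hu.2.trans hR.2.le⟩)
  refine integral_mono_of_nonneg ?_ (integrableOn_Ipot hρ hs hm hms) ?_
  · filter_upwards [ae_restrict_mem measurableSet_Ioo] with R hR
    have hrpos := (hspos R hR).trans_le (hsr R hR)
    exact mul_nonneg (mul_nonneg (hweight R hR) (inv_nonneg.2 hrpos.le)) (sq_nonneg R)
  · filter_upwards [ae_restrict_mem measurableSet_Ioo] with R hR
    have hinv := inv_anti₀ (hspos R hR) (hsr R hR)
    exact mul_le_mul_of_nonneg_right (mul_le_mul_of_nonneg_left hinv (hweight R hR)) (sq_nonneg R)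

end Potential

section Mechanical

/-- The integrand of `Imec Φ r r'`, as a function of the radius. Working with it on subintervals of
`[0, 1]` is what lets the energy of a glued deformation be split. -/
noncomputable def mecDensity (Φ : ℝ → ℝ → ℝ → ℝ → ℝ) (r r' : ℝ → ℝ) (R : ℝ) : ℝ :=
  Φ R (r' R) (r R / R) (r R / R) * R ^ 2

variable {Φ : ℝ → ℝ → ℝ → ℝ → ℝ} {u u' v v' : ℝ → ℝ} {b lam : ℝ}

lemma Imec_eq_integral_mecDensity (Φ : ℝ → ℝ → ℝ → ℝ → ℝ) (u u' : ℝ → ℝ) :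
    Imec Φ u u' = ∫ R in 0..1, mecDensity Φ u u' R := by
  rw [intervalIntegral.integral_of_le zero_le_one, integral_Ioc_eq_integral_Ioo]
  rfl

lemma mecDensity_const_mul_id (Φ : ℝ → ℝ → ℝ → ℝ → ℝ) (lam R : ℝ) :
    mecDensity Φ (fun x => lam * x) (fun _ => lam) R = Φ R lam lam lam * R ^ 2 := by
  rcases eq_or_ne R 0 with rfl | hR
  · simp [mecDensity]
  · rw [mecDensity, mul_div_cancel_right₀ lam hR]

lemma mecDensity_piecewise_Iic (Φ : ℝ → ℝ → ℝ → ℝ → ℝ) (u u' v v' : ℝ → ℝ) (b : ℝ) :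
    mecDensity Φ ((Iic b).piecewise u v) ((Iic b).piecewise u' v') =
      (Iic b).piecewise (mecDensity Φ u u') (mecDensity Φ v v') := by
  funext R
  by_cases hR : R ∈ Iic b
  · simp only [mecDensity, piecewise_eq_of_mem _ _ _ hR]
  · simp only [mecDensity, piecewise_eq_of_notMem _ _ _ hR]

namespace Adm

lemma isPrimitiveOn (hv : Adm Φ lam v v') : IsPrimitiveOn v v' 0 1 := ⟨hv.1, hv.2.1⟩

lemma ae_deriv_pos (hv : Adm Φ lam v v') : ∀ᵐ R ∂volume.restrict (Ioo 0 1), 0 < v' R := hv.2.2.1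

lemma apply_one (hv : Adm Φ lam v v') : v 1 = lam := hv.2.2.2.1

lemma apply_zero_nonneg (hv : Adm Φ lam v v') : 0 ≤ v 0 := hv.2.2.2.2.1

lemma intervalIntegrable_mecDensity (hv : Adm Φ lam v v') :
    IntervalIntegrable (mecDensity Φ v v') volume 0 1 :=
  (intervalIntegrable_iff_integrableOn_Ioo_of_le zero_le_one).2 hv.2.2.2.2.2

lemma monotoneOn (hv : Adm Φ lam v v') : MonotoneOn v (Icc 0 1) :=
  hv.isPrimitiveOn.monotoneOn (hv.ae_deriv_pos.mono fun _ h => h.le)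

lemma continuousOn (hv : Adm Φ lam v v') : ContinuousOn v (Icc 0 1) :=
  hv.isPrimitiveOn.continuousOn zero_le_one

lemma intervalIntegrable_mecDensity_left (hv : Adm Φ lam v v') (hb : b ∈ Icc 0 1) :
    IntervalIntegrable (mecDensity Φ v v') volume 0 b :=
  hv.intervalIntegrable_mecDensity.mono_set (uIcc_subset_uIcc_left (Icc_subset_uIcc hb))

lemma intervalIntegrable_mecDensity_right (hv : Adm Φ lam v v') (hb : b ∈ Icc 0 1) :
    IntervalIntegrable (mecDensity Φ v v') volume b 1 :=
  hv.intervalIntegrable_mecDensity.mono_set (uIcc_subset_uIcc_right (Icc_subset_uIcc hb))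

lemma piecewise (hv : Adm Φ lam v v') (hu : IsPrimitiveOn u u' 0 b) (hb : b ∈ Icc 0 1)
    (hu'pos : ∀ R, 0 < u' R) (hu0 : 0 ≤ u 0) (huv : u b = v b)
    (hW : IntervalIntegrable (mecDensity Φ u u') volume 0 b) :
    Adm Φ lam ((Iic b).piecewise u v) ((Iic b).piecewise u' v') := by
  have hglue := hu.piecewise (hv.isPrimitiveOn.mono_left hb) hb.1 hb.2 huv
  refine ⟨hglue.intervalIntegrable, hglue.eq_add_integral, ?_, ?_, ?_, ?_⟩
  · filter_upwards [hv.ae_deriv_pos] with R hR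
    by_cases hRb : R ∈ Iic b
    · simpa only [piecewise_eq_of_mem _ _ _ hRb] using hu'pos R
    · simpa only [piecewise_eq_of_notMem _ _ _ hRb] using hR
  · rcases hb.2.eq_or_lt with rfl | hb1
    · rw [piecewise_eq_of_mem _ _ _ self_mem_Iic, huv, hv.apply_one]
    · rw [piecewise_eq_of_notMem _ _ _ (notMem_Iic.2 hb1), hv.apply_one]
  · rwa [piecewise_eq_of_mem _ _ _ (mem_Iic.2 hb.1)]
  · change IntegrableOn (mecDensity Φ _ _) _
    rw [mecDensity_piecewise_Iic, ← intervalIntegrable_iff_integrableOn_Ioo_of_le zero_le_one]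
    exact intervalIntegrable_piecewise_Iic hb.1 hb.2 hW
      (hv.intervalIntegrable_mecDensity_right hb)

lemma Imec_piecewise_lt (hv : Adm Φ lam v v') (hb : b ∈ Icc 0 1)
    (hW : IntervalIntegrable (mecDensity Φ u u') volume 0 b)
    (hlt : ∫ R in 0..b, mecDensity Φ u u' R < ∫ R in 0..b, mecDensity Φ v v' R) :
    Imec Φ ((Iic b).piecewise u v) ((Iic b).piecewise u' v') < Imec Φ v v' := by
  have hvleft := hv.intervalIntegrable_mecDensity_left hb
  have hvright := hv.intervalIntegrable_mecDensity_right hb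
  rw [Imec_eq_integral_mecDensity, Imec_eq_integral_mecDensity, mecDensity_piecewise_Iic,
    integral_piecewise_Iic hb.1 hb.2 hW hvright,
    ← intervalIntegral.integral_add_adjacent_intervals hvleft hvright]
  gcongr

lemma apply_zero_le {R : ℝ} (hv : Adm Φ lam v v') (hR : R ∈ Icc 0 1) : v 0 ≤ v R :=
  hv.monotoneOn (left_mem_Icc.2 zero_le_one) hR hR.1

lemma apply_zero_le_boundary (hv : Adm Φ lam v v') : v 0 ≤ lam :=
  hv.apply_one ▸ hv.apply_zero_le (right_mem_Icc.2 zero_le_one)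

lemma exists_first_crossing (hv : Adm Φ lam v v') (hv0 : 0 < v 0) :
    ∃ b ∈ Ioc 0 1, v b = lam * b ∧ ∀ R ∈ Icc 0 b, lam * R ≤ v R := by
  obtain ⟨b, hb, hcross, habove⟩ := exists_first_zero (f := fun R => v R - lam * R) zero_le_one
    (hv.continuousOn.sub (by fun_prop)) (by simpa using hv0) (by simp [hv.apply_one])
  refine ⟨b, hb, sub_eq_zero.1 hcross, fun R hR => ?_⟩
  rcases hR.2.eq_or_lt with rfl | hRb
  · exact (sub_eq_zero.1 hcross).ge
  · exact (sub_pos.1 (habove R ⟨hR.1, hRb⟩)).le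

lemma Ipot_le_piecewise {ρ0 : ℝ → ℝ} (hv : Adm Φ lam v v') (hv0 : 0 < v 0)
    (hρ : IntegrableOn ρ0 (Icc 0 1)) (hρ0 : ∀ R ∈ Icc 0 1, 0 ≤ ρ0 R)
    (hvge : ∀ R ∈ Icc 0 b, lam * R ≤ v R)
    (hs : ContinuousOn ((Iic b).piecewise (fun x => lam * x) v) (Icc 0 1)) :
    Ipot ρ0 v ≤ Ipot ρ0 ((Iic b).piecewise (fun x => lam * x) v) := by
  refine Ipot_anti hρ hρ0 hs hv0 (fun R hR => ?_) fun R hR => ?_ <;> by_cases hRb : R ∈ Iic b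
  · rw [piecewise_eq_of_mem _ _ _ hRb]
    exact mul_le_mul_of_nonneg_right hv.apply_zero_le_boundary hR.1
  · rw [piecewise_eq_of_notMem _ _ _ hRb]
    exact (mul_le_of_le_one_right hv0.le hR.2).trans (hv.apply_zero_le hR)
  · rw [piecewise_eq_of_mem _ _ _ hRb]
    exact hvge R ⟨hR.1.le, hRb⟩
  · rw [piecewise_eq_of_notMem _ _ _ hRb]

end Adm

end Mechanical

/-! ### Comparison with the homogeneous deformation -/

/-- The stored-energy function `Φ` with radial coefficient `α`, acting on the principal stretches
`v1`, `v2`, `v3` through `φ` and on the volume ratio `v1 * v2 * v3` through `h`. -/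
def storedEnergy (α φ h : ℝ → ℝ) : ℝ → ℝ → ℝ → ℝ → ℝ :=
  fun R v1 v2 v3 => α R * (φ v1 + φ v2 + φ v3) + h (v1 * v2 * v3)

section StoredEnergy

variable {α φ h r r' : ℝ → ℝ} {b d0 lam p q R : ℝ}

lemma intervalIntegrable_mecDensity_const_mul_id (hb : 0 ≤ b) (hα : AntitoneOn α (Icc 0 b)) :
    IntervalIntegrable (mecDensity (storedEnergy α φ h) (fun R => lam * R) (fun _ => lam))
      volume 0 b := by
  have hαint : IntervalIntegrable α volume 0 b :=
    AntitoneOn.intervalIntegrable (by rwa [uIcc_of_le hb])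
  simp_rw [funext (mecDensity_const_mul_id _ lam)]
  exact ((hαint.mul_const _).add intervalIntegrable_const).mul_continuousOn (by fun_prop)

-- `p` and `q` are subgradients of `φ` at `lam` and of `h` at `lam ^ 3`; multiplied by `R ^ 2`, the
-- linear terms of the two tangent inequalities become exact derivatives.
lemma mecDensity_tangent_le (hα : 0 ≤ α R)
    (hp : ∀ t ∈ Ioi 0, φ lam + p * (t - lam) ≤ φ t)
    (hq : ∀ d ∈ Ioi 0, h (lam ^ 3) + q * (d - lam ^ 3) ≤ h d)
    (hR : 0 < R) (hr : 0 < r R) (hr' : 0 < r' R) :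
    mecDensity (storedEnergy α φ h) (fun x => lam * x) (fun _ => lam) R
        + p * (α R * (2 * R * (r R - lam * R) + R ^ 2 * (r' R - lam)))
        + q / 3 * (3 * r R ^ 2 * r' R - 3 * (lam * R) ^ 2 * lam) ≤
      mecDensity (storedEnergy α φ h) r r' R := by
  have hv : 0 < r R / R := div_pos hr hR
  have hφ : α R * (3 * φ lam + p * (r' R - lam) + 2 * (p * (r R / R - lam))) ≤
      α R * (φ (r' R) + φ (r R / R) + φ (r R / R)) :=
    mul_le_mul_of_nonneg_left (by linarith [hp _ hr', hp _ hv]) hα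
  have hh := hq (r' R * (r R / R) * (r R / R)) (mul_pos (mul_pos hr' hv) hv)
  refine le_trans (le_of_eq ?_) (mul_le_mul_of_nonneg_right (add_le_add hφ hh) (sq_nonneg R))
  rw [mecDensity_const_mul_id, storedEnergy, ← pow_three']
  field_simp
  ring

lemma integral_mecDensity_const_mul_id_sub_le (hb : 0 ≤ b) (hlam : 0 < lam)
    (hα : AntitoneOn α (Icc 0 b)) (hα0 : ∀ R ∈ Icc 0 b, 0 ≤ α R) (hp0 : 0 ≤ p)
    (hp : ∀ t ∈ Ioi 0, φ lam + p * (t - lam) ≤ φ t)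
    (hq : ∀ d ∈ Ioi 0, h (lam ^ 3) + q * (d - lam ^ 3) ≤ h d)
    (hr : IsPrimitiveOn r r' 0 b) (hr'pos : ∀ᵐ R ∂volume.restrict (Ioo 0 b), 0 < r' R)
    (hrb : r b = lam * b) (hrge : ∀ R ∈ Icc 0 b, lam * R ≤ r R)
    (hW : IntervalIntegrable (mecDensity (storedEnergy α φ h) r r') volume 0 b) :
    (∫ R in 0..b, mecDensity (storedEnergy α φ h) (fun x => lam * x) (fun _ => lam) R)
        - q / 3 * r 0 ^ 3 ≤ ∫ R in 0..b, mecDensity (storedEnergy α φ h) r r' R := by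
  have hlin := isPrimitiveOn_const_mul_id lam 0 b
  have hsq : IsPrimitiveOn (fun R => R ^ 2) (fun R => 2 * R) 0 b :=
    isPrimitiveOn_of_hasDerivAt (fun R => by simpa using hasDerivAt_pow 2 R) (by fun_prop)
  have hφprim := hsq.mul (hr.sub hlin) hb
  have hhprim : IsPrimitiveOn (fun R => r R ^ 3 - (lam * R) ^ 3)
      (fun R => 3 * r R ^ 2 * r' R - 3 * (lam * R) ^ 2 * lam) 0 b := by
    convert (hr.pow hb 2).sub (hlin.pow hb 2) using 4 <;> norm_num
  have hφterm_nonneg := integral_antitoneOn_mul_nonneg hb hα (hα0 b (right_mem_Icc.2 hb))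
    hφprim.intervalIntegrable fun R hR => by
      rw [(hφprim.mono_right hR).integral_eq_sub hR.1]
      nlinarith [hrge R hR, sq_nonneg R]
  have hhterm_eq := hhprim.integral_eq_sub hb
  have hlinInt := intervalIntegrable_mecDensity_const_mul_id (φ := φ) (h := h) (lam := lam) hb hα
  have hφint := (intervalIntegrable_mul_of_antitoneOn hb hα hφprim.intervalIntegrable).const_mul p
  have hhint := hhprim.intervalIntegrable.const_mul (q / 3)
  have hmono := intervalIntegral.integral_mono_ae_restrict hb ((hlinInt.add hφint).add hhint) hW (by
    rw [← restrict_Ioo_eq_restrict_Icc]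
    filter_upwards [hr'pos, ae_restrict_mem measurableSet_Ioo] with R hr'R hR
    have hRb := Ioo_subset_Icc_self hR
    exact mecDensity_tangent_le (hα0 R hRb) hp hq hR.1
      ((mul_pos hlam hR.1).trans_le (hrge R hRb)) hr'R)
  rw [intervalIntegral.integral_add (hlinInt.add hφint) hhint,
    intervalIntegral.integral_add hlinInt hφint, intervalIntegral.integral_const_mul,
    intervalIntegral.integral_const_mul, hhterm_eq, hrb] at hmono
  linarith [mul_nonneg hp0 hφterm_nonneg]

lemma integral_mecDensity_const_mul_id_lt (hb : 0 ≤ b) (hlam : 0 < lam)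
    (hα : AntitoneOn α (Icc 0 b)) (hα0 : ∀ R ∈ Icc 0 b, 0 ≤ α R) (hφ : ConvexOn ℝ (Ioi 0) φ)
    (hφmono : MonotoneOn φ (Ioi 0)) (hh : ConvexOn ℝ (Ioi 0) h) (hd0 : lam ^ 3 < d0)
    (hhd0 : h d0 < h (lam ^ 3)) (hr : IsPrimitiveOn r r' 0 b)
    (hr'pos : ∀ᵐ R ∂volume.restrict (Ioo 0 b), 0 < r' R) (hr0 : 0 < r 0) (hrb : r b = lam * b)
    (hrge : ∀ R ∈ Icc 0 b, lam * R ≤ r R)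
    (hW : IntervalIntegrable (mecDensity (storedEnergy α φ h) r r') volume 0 b) :
    ∫ R in 0..b, mecDensity (storedEnergy α φ h) (fun x => lam * x) (fun _ => lam) R <
      ∫ R in 0..b, mecDensity (storedEnergy α φ h) r r' R := by
  have hlam3 : 0 < lam ^ 3 := pow_pos hlam 3
  obtain ⟨p, hp⟩ := exists_subgradient_of_mem_interior hφ (by simpa using hlam)
  obtain ⟨q, hq⟩ := exists_subgradient_of_mem_interior hh (by simpa using hlam3)
  have hp0 : 0 ≤ p := by
    have hhalf : 0 < lam / 2 := half_pos hlam
    nlinarith [hp _ hhalf, hφmono hhalf hlam (half_le_self hlam.le)]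
  have hq0 : q < 0 := by nlinarith [hq d0 (hlam3.trans hd0)]
  have hgain := integral_mecDensity_const_mul_id_sub_le hb hlam hα hα0 hp0 hp hq hr hr'pos hrb
    hrge hW
  nlinarith [pow_pos hr0 3]

end StoredEnergy

theorem stmt12_general {ρ0 α φ h r r' : ℝ → ℝ} {d0 lam : ℝ} (hρ : IntegrableOn ρ0 (Icc 0 1))
    (hρ0 : ∀ R ∈ Icc 0 1, 0 ≤ ρ0 R) (hα : AntitoneOn α (Icc 0 1)) (hα0 : ∀ R ∈ Icc 0 1, 0 ≤ α R)
    (hφ : ConvexOn ℝ (Ioi 0) φ) (hφmono : MonotoneOn φ (Ioi 0)) (hh : ConvexOn ℝ (Ioi 0) h)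
    (hd0 : lam ^ 3 < d0) (hhd0 : h d0 < h (lam ^ 3)) (hadm : Adm (storedEnergy α φ h) lam r r')
    (hmin : ∀ s s', Adm (storedEnergy α φ h) lam s s' →
      Ifun (storedEnergy α φ h) ρ0 r r' ≤ Ifun (storedEnergy α φ h) ρ0 s s') :
    r 0 = 0 := by
  by_contra hne
  have hr0 : 0 < r 0 := hadm.apply_zero_nonneg.lt_of_ne' hne
  have hlam : 0 < lam := hr0.trans_le hadm.apply_zero_le_boundary
  obtain ⟨b, hb, hrb, hrge⟩ := hadm.exists_first_crossing hr0
  have hb01 : b ∈ Icc 0 1 := Ioc_subset_Icc_self hb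
  have hsub : Icc 0 b ⊆ Icc (0 : ℝ) 1 := Icc_subset_Icc_right hb.2
  have hW := intervalIntegrable_mecDensity_const_mul_id (φ := φ) (h := h) (lam := lam) hb.1.le
    (hα.mono hsub)
  have hs := hadm.piecewise (isPrimitiveOn_const_mul_id lam 0 b) hb01 (fun _ => hlam)
    (mul_zero lam).ge hrb.symm hW
  have hmec := hadm.Imec_piecewise_lt hb01 hW <|
    integral_mecDensity_const_mul_id_lt hb.1.le hlam (hα.mono hsub) (fun R hR => hα0 R (hsub hR))
      hφ hφmono hh hd0 hhd0 (hadm.isPrimitiveOn.mono_right hb01)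
      (ae_restrict_of_ae_restrict_of_subset (Ioo_subset_Ioo_right hb.2) hadm.ae_deriv_pos) hr0 hrb
      hrge (hadm.intervalIntegrable_mecDensity_left hb01)
  have hpot := hadm.Ipot_le_piecewise hr0 hρ hρ0 hrge hs.continuousOn
  have hle : Imec _ r r' - Ipot ρ0 r ≤ Imec _ _ _ - Ipot ρ0 _ := hmin _ _ hs
  linarith

theorem stmt12 (ρ0 : ℝ → ℝ) (k0 k1 : ℝ) (hk0 : 0 < k0) (hρmeas : Measurable ρ0)
    (hρ : ∀ R ∈ Icc (0:ℝ) 1, k0 ≤ ρ0 R ∧ ρ0 R ≤ k1)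
    -- the coefficient `α ∈ C¹([0,1])`, positive and nonincreasing
    (α α' : ℝ → ℝ)
    (hαd : ∀ R ∈ Icc (0:ℝ) 1, HasDerivWithinAt α (α' R) (Icc (0:ℝ) 1) R)
    (hα'cont : ContinuousOn α' (Icc (0:ℝ) 1))
    (hαpos : ∀ R ∈ Icc (0:ℝ) 1, 0 < α R)
    (hα'np : ∀ R ∈ Icc (0:ℝ) 1, α' R ≤ 0)
    -- `φ` convex, differentiable, nonnegative, with `φ' ≥ 0`
    (φ φ' : ℝ → ℝ) (hφconv : ConvexOn ℝ (Ioi 0) φ)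
    (hφd : ∀ t ∈ Ioi (0:ℝ), HasDerivAt φ (φ' t) t)
    (hφnn : ∀ t ∈ Ioi (0:ℝ), 0 ≤ φ t) (hφ'nn : ∀ t ∈ Ioi (0:ℝ), 0 ≤ φ' t)
    -- `h` strictly convex, differentiable, positive, with global minimum at `d₀ > 0`
    (h h' : ℝ → ℝ) (hhconv : StrictConvexOn ℝ (Ioi 0) h)
    (hhd : ∀ d ∈ Ioi (0:ℝ), HasDerivAt h (h' d) d)
    (hhpos : ∀ d ∈ Ioi (0:ℝ), 0 < h d)
    (d0 : ℝ) (hd0 : 0 < d0) (hmin0 : ∀ d ∈ Ioi (0:ℝ), h d0 ≤ h d)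
    (lam : ℝ) (hlam : 0 < lam) (hlamd0 : lam ^ 3 < d0)
    (r r' : ℝ → ℝ)
    (hadm : Adm (fun R v1 v2 v3 => α R * (φ v1 + φ v2 + φ v3) + h (v1 * v2 * v3)) lam r r')
    (hminr : ∀ s s' : ℝ → ℝ,
      Adm (fun R v1 v2 v3 => α R * (φ v1 + φ v2 + φ v3) + h (v1 * v2 * v3)) lam s s' →
      Ifun (fun R v1 v2 v3 => α R * (φ v1 + φ v2 + φ v3) + h (v1 * v2 * v3)) ρ0 r r' ≤
        Ifun (fun R v1 v2 v3 => α R * (φ v1 + φ v2 + φ v3) + h (v1 * v2 * v3)) ρ0 s s') :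
    r 0 = 0 :=
  stmt12_general (integrableOn_of_forall_bounds measurableSet_Icc measure_Icc_lt_top.ne hρmeas hρ)
    (fun R hR => hk0.le.trans (hρ R hR).1)
    (antitoneOn_of_forall_hasDerivWithinAt_nonpos (convex_Icc 0 1) hαd hα'np)
    (fun R hR => (hαpos R hR).le) hφconv
    (monotoneOn_of_forall_hasDerivWithinAt_nonneg (convex_Ioi 0)
      (fun t ht => (hφd t ht).hasDerivWithinAt) hφ'nn) hhconv.convexOn hlamd0
    (lt_of_strictConvexOn_of_forall_le hhconv hd0 (pow_pos hlam 3) hmin0 hlamd0.ne') hadm hminr
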